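/- arXiv:2210.12545 — 7 statements merged into one kernel-verified Lean document; each statement's English description precedes it below -/
import Mathlib

section
/- Define the sequence c : ℕ → ℝ by c(1) = √2 and c(n+1) = √(2 + c(n)) for n ≥ 1. Then the partial products ∏_{n=1}^{N} (c(n)/2) converge, as N → ∞, to 2/π (Viète's formula for π). -/
open Filter

/-! The angle-doubling identity `sinc (2 * x) = cos x * sinc x` telescopes, and since `sinc` is
continuous with `sinc 0 = 1` this gives Euler's product `sinc θ = ∏ n ≥ 1, cos (θ / 2 ^ n)`.
By the half-angle formula, nested radicals with first term `2 * cos (θ / 2)` have `n`-th term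
`2 * cos (θ / 2 ^ n)`; Viète's formula is the case `θ = π / 2`. -/

section

open Real Topology

theorem sinc_two_mul (x : ℝ) : sinc (2 * x) = cos x * sinc x := by
  obtain rfl | hx := eq_or_ne x 0
  · simp
  · rw [sinc_of_ne_zero (mul_ne_zero two_ne_zero hx), sinc_of_ne_zero hx, sin_two_mul]
    field_simp

theorem prod_cos_div_two_pow_mul_sinc (θ : ℝ) (N : ℕ) :
    (∏ n ∈ Finset.Icc 1 N, cos (θ / 2 ^ n)) * sinc (θ / 2 ^ N) = sinc θ := by
  induction N with
  | zero => simp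
  | succ N ih =>
    have hdouble : 2 * (θ / 2 ^ (N + 1)) = θ / 2 ^ N := by
      rw [pow_succ]
      field_simp
    rw [Finset.prod_Icc_succ_top (Nat.le_add_left 1 N), mul_assoc, ← sinc_two_mul, hdouble, ih]

theorem tendsto_sinc_div_two_pow (θ : ℝ) :
    Tendsto (fun N : ℕ => sinc (θ / 2 ^ N)) atTop (𝓝 1) := by
  have hangle : Tendsto (fun N : ℕ => θ / 2 ^ N) atTop (𝓝 0) :=
    tendsto_const_nhds.div_atTop (tendsto_pow_atTop_atTop_of_one_lt one_lt_two)
  simpa only [sinc_zero, Function.comp_def] using (continuous_sinc.tendsto 0).comp hangle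

theorem tendsto_prod_cos_div_two_pow (θ : ℝ) :
    Tendsto (fun N : ℕ => ∏ n ∈ Finset.Icc 1 N, cos (θ / 2 ^ n)) atTop (𝓝 (sinc θ)) := by
  have hsinc := tendsto_sinc_div_two_pow θ
  have hquot : Tendsto (fun N : ℕ => sinc θ / sinc (θ / 2 ^ N)) atTop (𝓝 (sinc θ)) := by
    simpa only [div_one, Pi.div_def] using tendsto_const_nhds.div hsinc one_ne_zero
  refine hquot.congr' ?_
  filter_upwards [hsinc.eventually_ne one_ne_zero] with N hN
  rw [div_eq_iff hN, prod_cos_div_two_pow_mul_sinc]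

theorem sqrt_two_add_two_mul_cos {x : ℝ} (hx : |x| ≤ π) :
    √(2 + 2 * cos x) = 2 * cos (x / 2) := by
  obtain ⟨hl, hr⟩ := abs_le.mp hx
  have hcos : 0 ≤ cos (x / 2) := cos_nonneg_of_mem_Icc ⟨by linarith, by linarith⟩
  have hsq : 2 + 2 * cos x = (2 * cos (x / 2)) ^ 2 := by
    rw [mul_pow, cos_sq, mul_div_cancel₀ x two_ne_zero]
    ring
  rw [hsq, sqrt_sq (mul_nonneg zero_le_two hcos)]

theorem eq_two_mul_cos_of_sqrt_two_add {c : ℕ → ℝ} {θ : ℝ} (hθ : |θ| ≤ 2 * π)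
    (h1 : c 1 = 2 * cos (θ / 2)) (hrec : ∀ n, 1 ≤ n → c (n + 1) = √(2 + c n))
    {n : ℕ} (hn : 1 ≤ n) : c n = 2 * cos (θ / 2 ^ n) := by
  induction n, hn using Nat.le_induction with
  | base => rw [h1, pow_one]
  | succ n hn ih =>
    have hangle : |θ / 2 ^ n| ≤ π := by
      have hpow : (2 : ℝ) ≤ 2 ^ n := le_self_pow₀ one_le_two (by lia)
      rw [abs_div, abs_of_pos (by positivity : (0 : ℝ) < 2 ^ n), div_le_iff₀' (by positivity)]
      exact hθ.trans (mul_le_mul_of_nonneg_right hpow pi_nonneg)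
    rw [hrec n hn, ih, sqrt_two_add_two_mul_cos hangle, div_div, ← pow_succ]

theorem viete_formula_pi_general {c : ℕ → ℝ} {θ : ℝ} (hθ : |θ| ≤ 2 * π)
    (h1 : c 1 = 2 * cos (θ / 2)) (hrec : ∀ n, 1 ≤ n → c (n + 1) = √(2 + c n)) :
    Tendsto (fun N : ℕ => ∏ n ∈ Finset.Icc 1 N, c n / 2) atTop (𝓝 (sinc θ)) := by
  refine (tendsto_prod_cos_div_two_pow θ).congr fun N => Finset.prod_congr rfl fun n hn => ?_
  rw [eq_two_mul_cos_of_sqrt_two_add hθ h1 hrec (Finset.mem_Icc.mp hn).1,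
    mul_div_cancel_left₀ _ two_ne_zero]

theorem sinc_pi_div_two : sinc (π / 2) = 2 / π := by
  rw [sinc_of_ne_zero pi_div_two_pos.ne', sin_pi_div_two, one_div_div]

end

/-- Viète's formula for π: the partial products `∏_{n=1}^N c n / 2` of the
nested radicals `c 1 = √2`, `c (n+1) = √(2 + c n)` converge to `2/π`. -/
theorem viete_formula_pi (c : ℕ → ℝ)
    (h1 : c 1 = Real.sqrt 2)
    (hrec : ∀ n, 1 ≤ n → c (n + 1) = Real.sqrt (2 + c n)) :
    Tendsto (fun N : ℕ => ∏ n ∈ Finset.Icc 1 N, c n / 2) atTop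
      (nhds (2 / Real.pi)) := by
  have hfirst : c 1 = 2 * Real.cos (Real.pi / 2 / 2) := by
    rw [h1, div_div, show (2 * 2 : ℝ) = 4 by norm_num, Real.cos_pi_div_four,
      mul_div_cancel₀ _ two_ne_zero]
  have hangle : |Real.pi / 2| ≤ 2 * Real.pi :=
    abs_le.mpr ⟨by linarith [Real.pi_pos], by linarith [Real.pi_pos]⟩
  simpa only [sinc_pi_div_two] using viete_formula_pi_general hangle hfirst hrec
end

section
/- For every real number x ≠ 0, the infinite product ∏_{n=1}^{∞} cos(x / 2^n) converges to sin(x)/x; that is, the partial products ∏_{n=1}^{N} cos(x/2^n) tend to sin(x)/x as N → ∞ (Euler's generalization of Viète's formula). -/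
open Filter

/-!
Iterating `sin z = 2 sin (z / 2) cos (z / 2)` gives
`sin z = (∏_{n=1}^N cos (z / 2 ^ n)) 2 ^ N sin (z / 2 ^ N)`, and `2 ^ N sin (z / 2 ^ N) → z` because
`sin` has derivative `1` at `0`.
-/

theorem prod_cos_mul_two_pow_mul_sin (z : ℂ) (N : ℕ) :
    (∏ n ∈ Finset.Icc 1 N, Complex.cos (z / 2 ^ n)) * (2 ^ N * Complex.sin (z / 2 ^ N)) =
      Complex.sin z := by
  induction N with
  | zero => simp
  | succ N ih =>
    have halve : z / 2 ^ N = 2 * (z / 2 ^ (N + 1)) := by field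
    rw [← ih, Finset.prod_Icc_succ_top (Nat.le_add_left 1 N), halve, Complex.sin_two_mul]
    ring

theorem tendsto_mul_sin_div_cobounded (z : ℂ) :
    Tendsto (fun c : ℂ => c * Complex.sin (z / c)) (Bornology.cobounded ℂ) (nhds z) := by
  simpa [div_eq_inv_mul] using
    (Complex.hasDerivAt_sin 0).hasFDerivAt.lim z tendsto_norm_cobounded_atTop

theorem euler_product_cos_general (z : ℂ) (hz : z ≠ 0) :
    Tendsto (fun N : ℕ => ∏ n ∈ Finset.Icc 1 N, Complex.cos (z / 2 ^ n))
      atTop (nhds (Complex.sin z / z)) := by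
  have two_pow : Tendsto (fun N : ℕ => (2 : ℂ) ^ N) atTop (Bornology.cobounded ℂ) := by
    rw [← tendsto_norm_atTop_iff_cobounded]
    simpa using tendsto_pow_atTop_atTop_of_one_lt (one_lt_two (α := ℝ))
  have denom : Tendsto (fun N : ℕ => 2 ^ N * Complex.sin (z / 2 ^ N)) atTop (nhds z) :=
    (tendsto_mul_sin_div_cobounded z).comp two_pow
  refine (tendsto_const_nhds.div denom hz).congr' ?_
  filter_upwards [denom.eventually_ne hz] with N denom_ne_zero
  exact (eq_div_of_mul_eq denom_ne_zero (prod_cos_mul_two_pow_mul_sin z N)).symm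

/-- Euler's generalization of Viète's formula: for `x ≠ 0`,
`∏_{n=1}^∞ cos(x / 2^n) = sin x / x`. -/
theorem euler_product_cos (x : ℝ) (hx : x ≠ 0) :
    Tendsto (fun N : ℕ => ∏ n ∈ Finset.Icc 1 N, Real.cos (x / 2 ^ n))
      atTop (nhds (Real.sin x / x)) := by
  rw [← tendsto_ofReal_iff]
  exact_mod_cast euler_product_cos_general x (Complex.ofReal_ne_zero.mpr hx)
end

section
/- In the Euclidean plane, let B, D, E, G, F be points and r > 0 a real number such that: dist(B, D) = dist(B, E) = dist(B, G) = r (so D, E, G lie on the circle of center B and radius r); F lies on the line through D and B with B strictly between D and F; G lies strictly between F and E; and dist(F, G) = r. Assume the configuration is nondegenerate (F ≠ B, E ≠ B, D ≠ B, the points F, G, E are not collinear with B unless forced). Then the angle ∠DBE equals three times the angle ∠GFB; that is, the angle at F trisects the given angle at the center B (Viète, Supplementum Geometriae, Proposition IX: trisection of an angle by neusis). -/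
open EuclideanGeometry

/-!
The segments `GF`, `GB` and `BE` all have the same length, so the triangles `FGB` and `GBE` are
isosceles. With `α = ∠ G F B`, the exterior angle of the first triangle gives `∠ B G E = 2α`, the
second triangle carries this angle over to `E`, and the exterior angle at `B` of the triangle `FBE`
is the sum of `2α` at `E` and `α` at `F`.
-/

section NormedAddTorsor

variable {V P : Type*} [NormedAddCommGroup V] [InnerProductSpace ℝ V] [MetricSpace P]
  [NormedAddTorsor V P]

theorem exterior_angle_eq_two_mul_angle_of_dist_eq {A B C X : P} (hXAB : Sbtw ℝ X A B)
    (h : dist A B = dist A C) : ∠ C A X = 2 * ∠ A B C :=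
  calc ∠ C A X = ∠ A C B + ∠ A B C := by
        rw [exterior_angle_eq_angle_add_angle X hXAB, angle_comm C B A]
    _ = 2 * ∠ A B C := by rw [← angle_eq_angle_of_dist_eq h, two_mul]

theorem viete_trisection_general {B D E G F : P} (hDBF : Sbtw ℝ D B F) (hFGE : Sbtw ℝ F G E)
    (hGF : dist G F = dist G B) (hBG : dist B G = dist B E) : ∠ D B E = 3 * ∠ G F B := by
  have angle_at_E : ∠ B E F = 2 * ∠ G F B :=
    calc ∠ B E F = ∠ B E G := (hFGE.symm.angle_eq_right B).symm
      _ = ∠ B G E := (angle_eq_angle_of_dist_eq hBG).symm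
      _ = 2 * ∠ G F B := exterior_angle_eq_two_mul_angle_of_dist_eq hFGE.symm hGF
  calc ∠ D B E = ∠ E B D := angle_comm D B E
    _ = ∠ B E F + ∠ E F B := by
      rw [exterior_angle_eq_angle_add_angle D hDBF, angle_comm E F B]
    _ = 2 * ∠ G F B + ∠ G F B := by rw [angle_at_E, hFGE.angle_eq_left B]
    _ = 3 * ∠ G F B := by ring

end NormedAddTorsor

/-- Viète's Proposition IX (trisection of an angle by neusis): with `D`, `E`, `G` on the
circle of center `B` and radius `r`, `B` strictly between `D` and `F`, `G` strictly
between `F` and `E`, and `dist F G = r`, the angle `∠DBE` equals three times `∠GFB`. -/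
theorem viete_trisection (B D E G F : EuclideanSpace ℝ (Fin 2)) (r : ℝ) (hr : 0 < r)
    (hD : dist B D = r) (hE : dist B E = r) (hG : dist B G = r)
    (hDBF : Sbtw ℝ D B F) (hFGE : Sbtw ℝ F G E) (hFG : dist F G = r)
    (hFB : F ≠ B) (hEB : E ≠ B) (hDB : D ≠ B) :
    ∠ D B E = 3 * ∠ G F B :=
  viete_trisection_general hDBF hFGE (by rw [dist_comm G F, dist_comm G B, hFG, hG])
    (hG.trans hE.symm)
end

section
/- The cubic equation x^3 − (7/3)·x = 7/27 has exactly one real root x in the open interval (4/3, 5/3). -/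
open Set

theorem existsUnique_mem_Ioo_apply_eq_of_injOn {α δ : Type*}
    [ConditionallyCompleteLinearOrder α] [TopologicalSpace α] [OrderTopology α] [DenselyOrdered α]
    [LinearOrder δ] [TopologicalSpace δ] [OrderClosedTopology δ]
    {f : α → δ} {a b : α} {y : δ} (hab : a ≤ b) (hcont : ContinuousOn f (Icc a b))
    (hinj : InjOn f (Ioo a b)) (hy : y ∈ Ioo (f a) (f b)) :
    ∃! x, x ∈ Ioo a b ∧ f x = y := by
  obtain ⟨x, hx, hxy⟩ := intermediate_value_Ioo hab hcont hy
  exact ⟨x, ⟨hx, hxy⟩, fun z ⟨hz, hzy⟩ ↦ hinj hz hx (hzy.trans hxy.symm)⟩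

theorem strictMonoOn_cube_sub_mul {R : Type*} [CommRing R] [LinearOrder R] [IsStrictOrderedRing R]
    {a p : R} (ha : 0 ≤ a) (hp : p ≤ 3 * a ^ 2) :
    StrictMonoOn (fun x : R ↦ x ^ 3 - p * x) (Ici a) := by
  intro x (hx : a ≤ x) y _ hxy
  have hx_nonneg : 0 ≤ x := ha.trans hx
  have hsq : x ^ 2 < y ^ 2 := by gcongr
  have hmul : x * x ≤ y * x := by gcongr
  have secant_slope_pos : 0 < y ^ 2 + y * x + x ^ 2 - p := by
    refine sub_pos.mpr ?_
    calc
      p ≤ 3 * a ^ 2 := hp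
      _ ≤ 3 * x ^ 2 := by gcongr
      _ = x ^ 2 + x * x + x ^ 2 := by ring
      _ < y ^ 2 + y * x + x ^ 2 := by linarith
  refine sub_pos.mp ?_
  calc
    0 < (y - x) * (y ^ 2 + y * x + x ^ 2 - p) := mul_pos (sub_pos.mpr hxy) secant_slope_pos
    _ = (y ^ 3 - p * y) - (x ^ 3 - p * x) := by ring

theorem existsUnique_mem_Ioo_cube_sub_mul_eq {a b p q : ℝ} (ha : 0 ≤ a) (hab : a ≤ b)
    (hp : p ≤ 3 * a ^ 2) (hq : q ∈ Ioo (a ^ 3 - p * a) (b ^ 3 - p * b)) :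
    ∃! x, x ∈ Ioo a b ∧ x ^ 3 - p * x = q :=
  have hinj : InjOn (fun x : ℝ ↦ x ^ 3 - p * x) (Ioo a b) :=
    (strictMonoOn_cube_sub_mul ha hp).injOn.mono fun _ hx ↦ hx.1.le
  existsUnique_mem_Ioo_apply_eq_of_injOn hab (by fun_prop) hinj hq

/-- The cubic `x³ − (7/3)x = 7/27` has exactly one real root in the open
interval `(4/3, 5/3)`. -/
theorem heptagon_cubic_unique_root :
    ∃! x : ℝ, x ∈ Set.Ioo (4 / 3 : ℝ) (5 / 3) ∧
      x ^ 3 - (7 / 3) * x = 7 / 27 := by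
  have critical_bound : (7 / 3 : ℝ) ≤ 3 * (4 / 3) ^ 2 := by norm_num
  have value_at_left : (4 / 3 : ℝ) ^ 3 - 7 / 3 * (4 / 3) < 7 / 27 := by norm_num
  have value_at_right : (7 / 27 : ℝ) < (5 / 3) ^ 3 - 7 / 3 * (5 / 3) := by norm_num
  exact existsUnique_mem_Ioo_cube_sub_mul_eq (by norm_num) (by norm_num) critical_bound
    ⟨value_at_left, value_at_right⟩
end

section
/- Let x = (2·√7/3)·cos((1/3)·arccos(1/(2·√7))). Then x satisfies x^3 − (7/3)·x = 7/27. That is, the cubic arising in Viète's heptagon construction is solved by trisecting the angle arccos(1/(2√7)). -/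
/-! Substituting `x = 2r cos θ` turns the depressed cubic `x³ - 3r²x` into `2r³ cos (3θ)`, so
`x³ - 3r²x = r²a` asks for an angle `θ` whose triple has cosine `a / (2r)`. The heptagon cubic
has `r = √7 / 3` and `a = 1 / 3`. -/

theorem two_mul_mul_cos_pow_three_sub (r θ : ℝ) :
    (2 * r * Real.cos θ) ^ 3 - 3 * r ^ 2 * (2 * r * Real.cos θ) =
      2 * r ^ 3 * Real.cos (3 * θ) := by
  rw [Real.cos_three_mul]
  ring

theorem depressed_cubic_eq_of_eq_two_mul_mul_cos_arccos_div_three {r a x : ℝ}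
    (ha : |a| ≤ 2 * r) (hx : x = 2 * r * Real.cos (Real.arccos (a / (2 * r)) / 3)) :
    x ^ 3 - 3 * r ^ 2 * x = r ^ 2 * a := by
  have h2r : 0 ≤ 2 * r := (abs_nonneg a).trans ha
  have hratio : |a / (2 * r)| ≤ 1 := by
    rw [abs_div, abs_of_nonneg h2r]
    exact div_le_one_of_le₀ ha h2r
  obtain ⟨hlower, hupper⟩ := abs_le.mp hratio
  calc
    x ^ 3 - 3 * r ^ 2 * x = 2 * r ^ 3 * Real.cos (3 * (Real.arccos (a / (2 * r)) / 3)) := by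
      rw [hx, two_mul_mul_cos_pow_three_sub]
    _ = 2 * r ^ 3 * (a / (2 * r)) := by
      rw [mul_div_cancel₀ _ three_ne_zero, Real.cos_arccos hlower hupper]
    _ = r ^ 2 * a := by field_simp

/-- The cubic of Viète's heptagon construction is solved by angle trisection:
`x = (2√7/3)·cos((1/3)·arccos(1/(2√7)))` satisfies `x³ − (7/3)x = 7/27`. -/
theorem heptagon_cubic_solved_by_trisection (x : ℝ)
    (hx : x = (2 * Real.sqrt 7 / 3) *
      Real.cos ((1 / 3) * Real.arccos (1 / (2 * Real.sqrt 7)))) :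
    x ^ 3 - (7 / 3) * x = 7 / 27 := by
  have hr : (√7 / 3) ^ 2 = 7 / 9 := by
    rw [div_pow, Real.sq_sqrt (by norm_num)]
    norm_num
  have ha : |(1 / 3 : ℝ)| ≤ 2 * (√7 / 3) := by
    have hsqrt : 1 ≤ √7 := Real.one_le_sqrt.mpr (by norm_num)
    rw [abs_of_pos (by norm_num)]
    linarith
  have hcos : (1 / 3) / (2 * (√7 / 3)) = 1 / (2 * √7) := by field_simp
  have htrisect : x = 2 * (√7 / 3) * Real.cos (Real.arccos ((1 / 3) / (2 * (√7 / 3))) / 3) := by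
    rw [hx, hcos, one_div_mul_eq_div, mul_div_assoc]
  have hcubic := depressed_cubic_eq_of_eq_two_mul_mul_cos_arccos_div_three ha htrisect
  rw [hr] at hcubic
  linarith
end

section
/- The real number y = 2·cos(2π/7) satisfies the cubic equation y^3 + y^2 − 2y − 1 = 0. -/
/-!
By the Dirichlet kernel identity, `1 + 2 cos θ + 2 cos 2θ + ⋯ + 2 cos mθ` vanishes whenever `θ` is
the argument of a nontrivial `(2m + 1)`-th root of unity. For `m = 3` the double and triple angle
formulas turn this sum into `1 + y + (y² - 2) + (y³ - 3y)`, where `y = 2 cos θ`.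
-/

open Real Finset

theorem sin_half_mul_one_add_sum_two_cos (θ : ℝ) (m : ℕ) :
    sin (θ / 2) * (1 + ∑ k ∈ range m, 2 * cos ((k + 1) * θ)) = sin ((2 * m + 1) * θ / 2) := by
  induction m with
  | zero => simp
  | succ m ih =>
    have telescope : sin (θ / 2) * (2 * cos ((m + 1) * θ)) =
        sin ((2 * (m + 1) + 1) * θ / 2) - sin ((2 * m + 1) * θ / 2) := by
      rw [sin_sub_sin]
      ring_nf
    rw [sum_range_succ, ← add_assoc, mul_add, ih, telescope, Nat.cast_add_one]
    ring

theorem sin_half_eq_zero_iff_cos_eq_one {x : ℝ} : sin (x / 2) = 0 ↔ cos x = 1 := by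
  rw [← sq_eq_zero_iff, sin_sq_eq_half_sub, mul_div_cancel₀ x two_ne_zero]
  constructor <;> intro h <;> linarith

theorem one_add_sum_two_cos_eq_zero {θ : ℝ} {m : ℕ} (hθ : cos θ ≠ 1)
    (hmθ : cos ((2 * m + 1) * θ) = 1) :
    1 + ∑ k ∈ range m, 2 * cos ((k + 1) * θ) = 0 := by
  have kernel := sin_half_mul_one_add_sum_two_cos θ m
  rw [sin_half_eq_zero_iff_cos_eq_one.mpr hmθ] at kernel
  exact (mul_eq_zero.mp kernel).resolve_left (mt sin_half_eq_zero_iff_cos_eq_one.mp hθ)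

theorem two_cos_root_of_cos_seven_mul_eq_one {θ : ℝ} (hθ : cos θ ≠ 1)
    (h7θ : cos (7 * θ) = 1) :
    (2 * cos θ) ^ 3 + (2 * cos θ) ^ 2 - 2 * (2 * cos θ) - 1 = 0 := by
  have cos_sum : 1 + (2 * cos θ + 2 * cos (2 * θ) + 2 * cos (3 * θ)) = 0 := by
    convert! one_add_sum_two_cos_eq_zero (m := 3) hθ (by norm_num [h7θ]) using 2
    norm_num [sum_range_succ]
  rw [cos_two_mul, cos_three_mul] at cos_sum
  linear_combination cos_sum

/-- The cyclotomic cubic of the heptagon: `y = 2 cos (2π/7)` satisfies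
`y³ + y² − 2y − 1 = 0`. -/
theorem two_cos_two_pi_div_seven_root (y : ℝ)
    (hy : y = 2 * Real.cos (2 * Real.pi / 7)) :
    y ^ 3 + y ^ 2 - 2 * y - 1 = 0 := by
  have cos_ne_one : cos (2 * π / 7) ≠ 1 := by
    rw [Ne, cos_eq_one_iff_of_lt_of_lt] <;> linarith [pi_pos]
  have cos_seven_mul : cos (7 * (2 * π / 7)) = 1 := by
    rw [mul_div_cancel₀ _ (by norm_num), cos_two_pi]
  rw [hy]
  exact two_cos_root_of_cos_seven_mul_eq_one cos_ne_one cos_seven_mul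
end

section
/- The real number x = 2·cos(2π/7) + 1/3 satisfies the cubic equation x^3 − (7/3)·x = 7/27. That is, the depressed form (via the substitution y = x − 1/3) of the cyclotomic cubic y^3 + y^2 − 2y − 1 = 0 for y = 2cos(2π/7) is exactly the cubic arising in Viète's construction of the regular heptagon. -/
/-!
A primitive seventh root of unity `ζ` satisfies `1 + ζ + ⋯ + ζ⁶ = 0`. This polynomial is
palindromic, so dividing it by `ζ³` leaves a cubic equation for `ζ + ζ⁻¹`, which is
`2 cos (2π/7)` when `ζ = exp (2πi/7)`. Shifting by `1/3` removes the quadratic term.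
-/

section Field

variable {K : Type*} [Field K]

theorem geom_sum_seven_div_pow_three {ζ : K} (hζ : ζ ≠ 0) :
    (∑ i ∈ Finset.range 7, ζ ^ i) / ζ ^ 3 =
      (ζ + ζ⁻¹) ^ 3 + (ζ + ζ⁻¹) ^ 2 - 2 * (ζ + ζ⁻¹) - 1 := by
  simp only [Finset.sum_range_succ, Finset.sum_range_zero]
  field_simp
  ring

theorem add_inv_cubic_eq_zero_of_isPrimitiveRoot_seven {ζ : K} (hζ : IsPrimitiveRoot ζ 7) :
    (ζ + ζ⁻¹) ^ 3 + (ζ + ζ⁻¹) ^ 2 - 2 * (ζ + ζ⁻¹) - 1 = 0 := by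
  rw [← geom_sum_seven_div_pow_three (hζ.ne_zero (by norm_num)),
    hζ.geom_sum_eq_zero (by norm_num), zero_div]

theorem add_third_depressed_cubic_iff (h3 : (3 : K) ≠ 0) (y : K) :
    (y + 1 / 3) ^ 3 - 7 / 3 * (y + 1 / 3) = 7 / 27 ↔ y ^ 3 + y ^ 2 - 2 * y - 1 = 0 := by
  have h27 : (27 : K) = 3 ^ 3 := by norm_num
  have depress : (y + 1 / 3) ^ 3 - 7 / 3 * (y + 1 / 3) - 7 / 27 =
      y ^ 3 + y ^ 2 - 2 * y - 1 := by
    rw [h27]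
    field_simp
    ring
  rw [← sub_eq_zero, depress]

end Field

theorem two_mul_cos_cubic_eq_zero_of_isCoprime_seven {k : ℤ} (hk : IsCoprime k 7) :
    (2 * Real.cos (2 * Real.pi * k / 7)) ^ 3 + (2 * Real.cos (2 * Real.pi * k / 7)) ^ 2 -
      2 * (2 * Real.cos (2 * Real.pi * k / 7)) - 1 = 0 := by
  set θ : ℝ := 2 * Real.pi * k / 7 with hθ
  have primitive : IsPrimitiveRoot (Complex.exp (θ * Complex.I)) 7 := by
    convert Complex.isPrimitiveRoot_exp_of_isCoprime k 7 (by norm_num) hk using 2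
    push_cast [hθ]
    ring
  have add_inv : Complex.exp (θ * Complex.I) + (Complex.exp (θ * Complex.I))⁻¹ =
      2 * Complex.cos θ := by
    rw [Complex.two_cos, ← Complex.exp_neg, neg_mul]
  have cubic := add_inv_cubic_eq_zero_of_isPrimitiveRoot_seven primitive
  rw [add_inv] at cubic
  exact_mod_cast cubic

/-- `x = 2 cos (2π/7) + 1/3` satisfies the cubic `x³ − (7/3)x = 7/27` arising in
Viète's construction of the regular heptagon. -/
theorem heptagon_cubic_root_from_cos (x : ℝ)
    (hx : x = 2 * Real.cos (2 * Real.pi / 7) + 1 / 3) :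
    x ^ 3 - (7 / 3) * x = 7 / 27 := by
  rw [hx, add_third_depressed_cubic_iff three_ne_zero]
  simpa only [Int.cast_one, mul_one] using
    two_mul_cos_cubic_eq_zero_of_isCoprime_seven (k := 1) isCoprime_one_left
end
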